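/- arXiv:1808.03416 — 2 statements merged into one kernel-verified Lean document; each statement's English description precedes it below -/
import Mathlib

section
/- Let D be a bounded domain in a complex Banach space V. If D is complete with respect to the Carathéodory distance C_D, then D is a domain of holomorphy. -/
open Metric Set

/-- The inverse hyperbolic tangent, `artanh t = ½ log((1+t)/(1−t))`. -/
noncomputable def artanh (t : ℝ) : ℝ := (1 / 2) * Real.log ((1 + t) / (1 - t))

/-- The Carathéodory distance of a domain `D` in a complex Banach space: the supremum of
Poincaré distances of images under holomorphic maps `D → 𝔻`. -/
noncomputable def caraDist {V : Type*} [NormedAddCommGroup V] [NormedSpace ℂ V]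
    (D : Set V) (x y : V) : ℝ :=
  sSup {t : ℝ | ∃ f : V → ℂ, DifferentiableOn ℂ f D ∧ (∀ z ∈ D, ‖f z‖ < 1) ∧
    t = artanh ‖(f x - f y) / (1 - (starRingEnd ℂ) (f x) * f y)‖}

/-- A domain `D` in a complex Banach space is a domain of holomorphy if there is no pair of
open sets `U, W` with `U` connected, `D ∩ U ≠ ∅`, `U ⊄ D`, `∅ ≠ W ⊆ D ∩ U`, such that every
holomorphic function on `D` extends holomorphically to `U`, agreeing on `W`. -/
def IsDomainOfHolomorphy {V : Type*} [NormedAddCommGroup V] [NormedSpace ℂ V]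
    (D : Set V) : Prop :=
  ¬ ∃ U W : Set V, IsOpen U ∧ IsConnected U ∧ (D ∩ U).Nonempty ∧ ¬ U ⊆ D ∧
    IsOpen W ∧ W.Nonempty ∧ W ⊆ D ∩ U ∧
    ∀ f : V → ℂ, DifferentiableOn ℂ f D →
      ∃ F : V → ℂ, DifferentiableOn ℂ F U ∧ Set.EqOn f F W

/-!
Suppose every holomorphic function on `D` continues from `W` to `U`. It then continues from the
component `C` of `D ∩ U` through a point of `W`, and `C` accumulates at some `p ∈ U \ D`. A
continuation `F` of `f` takes no value that `f` omits, since `(f - F u)⁻¹` continues as well; so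
maps into the disc continue to maps into the disc, and `C_D ≤ C_U` on `C`. Since `C_U` is continuous
at the interior point `(p, p)`, a sequence in `C` tending to `p` is `C_D`-Cauchy, hence converges in
`C_D` to a point of `D`. As `D` is bounded, `C_D` dominates a multiple of the norm, so that point is
`p ∉ D`, a contradiction.
-/

open Filter
open scoped Topology ComplexConjugate

section Artanh

lemma artanh_eq_real_artanh {t : ℝ} (ht : t ∈ Icc (-1) 1) : artanh t = Real.artanh t :=
  (Real.artanh_eq_half_log ht).symm

lemma artanh_le_artanh {s t : ℝ} (hs : -1 < s) (hst : s ≤ t) (ht : t < 1) :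
    artanh s ≤ artanh t := by
  rw [artanh_eq_real_artanh ⟨hs.le, (hst.trans_lt ht).le⟩,
    artanh_eq_real_artanh ⟨(hs.trans_le hst).le, ht.le⟩]
  exact Real.artanh_le_artanh hs ht hst

lemma artanh_nonneg {t : ℝ} (h₀ : 0 ≤ t) (h₁ : t ≤ 1) : 0 ≤ artanh t :=
  artanh_eq_real_artanh ⟨by linarith, h₁⟩ ▸ Real.artanh_nonneg h₀

lemma self_le_artanh {t : ℝ} (h₀ : 0 ≤ t) (h₁ : t < 1) : t ≤ artanh t := by
  have h : 0 < 1 - t := sub_pos.2 h₁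
  calc t = 1 / 2 * (2 * (2 * t / (1 - t)) / (2 * t / (1 - t) + 2)) := by field_simp; ring
    _ ≤ 1 / 2 * Real.log (1 + 2 * t / (1 - t)) := by
        gcongr; exact Real.le_log_one_add_of_nonneg (by positivity)
    _ = artanh t := by rw [artanh]; congr 2; field_simp; ring

lemma artanh_add_artanh {s t : ℝ} (hs : s ∈ Ico 0 1) (ht : t ∈ Ico 0 1) :
    artanh s + artanh t = artanh ((s + t) / (1 + s * t)) := by
  obtain ⟨hs₀, hs₁⟩ := hs
  obtain ⟨ht₀, ht₁⟩ := ht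
  have hs' : 0 < 1 - s := sub_pos.2 hs₁
  have ht' : 0 < 1 - t := sub_pos.2 ht₁
  have hst : (1 + (s + t) / (1 + s * t)) / (1 - (s + t) / (1 + s * t)) =
      (1 + s) / (1 - s) * ((1 + t) / (1 - t)) := by
    have : 0 < 1 + s * t := by positivity
    have : 1 + s * t - (s + t) ≠ 0 := by nlinarith
    field_simp
    ring
  rw [artanh, artanh, artanh, hst, Real.log_mul (div_pos (by positivity) hs').ne'
    (div_pos (by positivity) ht').ne', mul_add]

lemma tendsto_artanh_zero : Tendsto artanh (𝓝 0) (𝓝 0) := by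
  have h : ContinuousAt artanh 0 := by
    unfold artanh
    exact continuousAt_const.mul
      (ContinuousAt.log (ContinuousAt.div (by fun_prop) (by fun_prop) (by norm_num)) (by norm_num))
  simpa [ContinuousAt, artanh] using h

end Artanh

section PoincareDistance

/-- The Möbius involution of the unit disc exchanging `0` and `a`. -/
noncomputable def diskMobius (a z : ℂ) : ℂ := (a - z) / (1 - conj a * z)

/-- The pseudo-hyperbolic distance on the unit disc. -/
noncomputable def pseudoHypDist (a b : ℂ) : ℝ := ‖diskMobius a b‖

/-- The Poincaré distance on the unit disc, normalised as in `caraDist`. -/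
noncomputable def poincareDist (a b : ℂ) : ℝ := artanh (pseudoHypDist a b)

variable {a b c : ℂ}

lemma one_sub_conj_mul_ne_zero (ha : ‖a‖ < 1) (hb : ‖b‖ ≤ 1) : 1 - conj a * b ≠ 0 := by
  refine sub_ne_zero.2 fun h => ?_
  have : ‖conj a * b‖ < 1 := by
    rw [norm_mul, Complex.norm_conj]
    exact mul_lt_one_of_nonneg_of_lt_one_left (norm_nonneg a) ha hb
  simp [← h] at this

lemma norm_one_sub_conj_mul_comm (a b : ℂ) : ‖1 - conj a * b‖ = ‖1 - conj b * a‖ := by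
  rw [← Complex.norm_conj]
  simp [mul_comm]

lemma one_sub_sq_norm_pos (ha : ‖a‖ < 1) : 0 < 1 - ‖a‖ ^ 2 :=
  sub_pos.2 (pow_lt_one₀ (norm_nonneg a) ha two_ne_zero)

lemma pseudoHypDist_nonneg (a b : ℂ) : 0 ≤ pseudoHypDist a b := norm_nonneg _

lemma pseudoHypDist_comm (a b : ℂ) : pseudoHypDist a b = pseudoHypDist b a := by
  simp only [pseudoHypDist, diskMobius, norm_div, norm_sub_rev a b, norm_one_sub_conj_mul_comm a b]

lemma one_sub_sq_pseudoHypDist (ha : ‖a‖ < 1) (hb : ‖b‖ ≤ 1) :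
    1 - pseudoHypDist a b ^ 2 = (1 - ‖a‖ ^ 2) * (1 - ‖b‖ ^ 2) / ‖1 - conj a * b‖ ^ 2 := by
  have hne : ‖1 - conj a * b‖ ≠ 0 := norm_ne_zero_iff.2 (one_sub_conj_mul_ne_zero ha hb)
  have key : ‖1 - conj a * b‖ ^ 2 - ‖a - b‖ ^ 2 = (1 - ‖a‖ ^ 2) * (1 - ‖b‖ ^ 2) := by
    simp only [Complex.sq_norm, Complex.normSq_apply, Complex.sub_re, Complex.sub_im,
      Complex.mul_re, Complex.mul_im, Complex.conj_re, Complex.conj_im, Complex.one_re,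
      Complex.one_im]
    ring
  rw [← key, pseudoHypDist, diskMobius, norm_div, div_pow, sub_div, div_self (pow_ne_zero 2 hne)]

lemma pseudoHypDist_lt_one (ha : ‖a‖ < 1) (hb : ‖b‖ < 1) : pseudoHypDist a b < 1 := by
  have hpos : 0 < 1 - pseudoHypDist a b ^ 2 := by
    rw [one_sub_sq_pseudoHypDist ha hb.le]
    exact div_pos (mul_pos (one_sub_sq_norm_pos ha) (one_sub_sq_norm_pos hb))
      (pow_pos (norm_pos_iff.2 (one_sub_conj_mul_ne_zero ha hb.le)) 2)
  exact (pow_lt_one_iff_of_nonneg (pseudoHypDist_nonneg a b) two_ne_zero).1 (sub_pos.1 hpos)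

lemma pseudoHypDist_mem_Ico (ha : ‖a‖ < 1) (hb : ‖b‖ < 1) : pseudoHypDist a b ∈ Ico 0 1 :=
  ⟨pseudoHypDist_nonneg a b, pseudoHypDist_lt_one ha hb⟩

lemma norm_diskMobius_lt_one (ha : ‖a‖ < 1) (hb : ‖b‖ < 1) : ‖diskMobius a b‖ < 1 :=
  pseudoHypDist_lt_one ha hb

lemma pseudoHypDist_diskMobius (ha : ‖a‖ < 1) (hb : ‖b‖ < 1) (hc : ‖c‖ < 1) :
    pseudoHypDist (diskMobius b a) (diskMobius b c) = pseudoHypDist a c := by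
  have hba : 1 - conj b * a ≠ 0 := one_sub_conj_mul_ne_zero hb ha.le
  have hba' : 1 - b * conj a ≠ 0 := by
    simpa using (map_ne_zero (starRingEnd ℂ)).2 hba
  have hbc : 1 - conj b * c ≠ 0 := one_sub_conj_mul_ne_zero hb hc.le
  have hbb : 1 - conj b * b ≠ 0 := one_sub_conj_mul_ne_zero hb hb.le
  have hnum : diskMobius b a - diskMobius b c =
      (c - a) * (1 - conj b * b) / ((1 - conj b * a) * (1 - conj b * c)) := by
    rw [diskMobius, diskMobius, div_sub_div _ _ hba hbc]
    congr 1
    ring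
  have hden : 1 - conj (diskMobius b a) * diskMobius b c =
      (1 - conj a * c) * (1 - conj b * b) / ((1 - b * conj a) * (1 - conj b * c)) := by
    simp only [diskMobius, map_div₀, map_sub, map_mul, map_one, Complex.conj_conj]
    rw [div_mul_div_comm, one_sub_div (mul_ne_zero hba' hbc)]
    congr 1
    ring
  have hnorm : ‖1 - b * conj a‖ = ‖1 - conj b * a‖ := by
    rw [mul_comm, norm_one_sub_conj_mul_comm]
  have hfactor : ‖1 - conj b * b‖ / (‖1 - conj b * a‖ * ‖1 - conj b * c‖) ≠ 0 :=
    div_ne_zero (norm_ne_zero_iff.2 hbb)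
      (mul_ne_zero (norm_ne_zero_iff.2 hba) (norm_ne_zero_iff.2 hbc))
  rw [pseudoHypDist, diskMobius, hnum, hden, pseudoHypDist, diskMobius]
  simp only [norm_div, norm_mul, hnorm, norm_sub_rev c a]
  rw [mul_div_assoc ‖a - c‖, mul_div_assoc ‖1 - conj a * c‖, mul_div_mul_right _ _ hfactor]

lemma pseudoHypDist_le_norm_add_norm_div (ha : ‖a‖ < 1) (hb : ‖b‖ < 1) :
    pseudoHypDist a b ≤ (‖a‖ + ‖b‖) / (1 + ‖a‖ * ‖b‖) := by
  refine (sq_le_sq₀ (pseudoHypDist_nonneg a b) (by positivity)).1 ?_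
  have hden : ‖1 - conj a * b‖ ≤ 1 + ‖a‖ * ‖b‖ := by
    simpa [norm_mul, Complex.norm_conj] using norm_sub_le 1 (conj a * b)
  have hpos : 0 < ‖1 - conj a * b‖ := norm_pos_iff.2 (one_sub_conj_mul_ne_zero ha hb.le)
  have hnum : 0 ≤ (1 - ‖a‖ ^ 2) * (1 - ‖b‖ ^ 2) :=
    (mul_pos (one_sub_sq_norm_pos ha) (one_sub_sq_norm_pos hb)).le
  have hle : 1 - ((‖a‖ + ‖b‖) / (1 + ‖a‖ * ‖b‖)) ^ 2 ≤ 1 - pseudoHypDist a b ^ 2 :=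
    calc 1 - ((‖a‖ + ‖b‖) / (1 + ‖a‖ * ‖b‖)) ^ 2
        = (1 - ‖a‖ ^ 2) * (1 - ‖b‖ ^ 2) / (1 + ‖a‖ * ‖b‖) ^ 2 := by field_simp; ring
      _ ≤ (1 - ‖a‖ ^ 2) * (1 - ‖b‖ ^ 2) / ‖1 - conj a * b‖ ^ 2 := by gcongr
      _ = 1 - pseudoHypDist a b ^ 2 := (one_sub_sq_pseudoHypDist ha hb.le).symm
  linarith

lemma pseudoHypDist_triangle (ha : ‖a‖ < 1) (hb : ‖b‖ < 1) (hc : ‖c‖ < 1) :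
    pseudoHypDist a c ≤ (pseudoHypDist a b + pseudoHypDist b c) /
      (1 + pseudoHypDist a b * pseudoHypDist b c) := by
  rw [← pseudoHypDist_diskMobius ha hb hc, pseudoHypDist_comm a b]
  exact pseudoHypDist_le_norm_add_norm_div (norm_diskMobius_lt_one hb ha)
    (norm_diskMobius_lt_one hb hc)

lemma poincareDist_comm (a b : ℂ) : poincareDist a b = poincareDist b a := by
  rw [poincareDist, pseudoHypDist_comm, poincareDist]

lemma poincareDist_nonneg (ha : ‖a‖ < 1) (hb : ‖b‖ < 1) : 0 ≤ poincareDist a b :=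
  artanh_nonneg (pseudoHypDist_nonneg a b) (pseudoHypDist_lt_one ha hb).le

lemma poincareDist_triangle (ha : ‖a‖ < 1) (hb : ‖b‖ < 1) (hc : ‖c‖ < 1) :
    poincareDist a c ≤ poincareDist a b + poincareDist b c := by
  obtain ⟨hs₀, hs₁⟩ := pseudoHypDist_mem_Ico ha hb
  obtain ⟨ht₀, ht₁⟩ := pseudoHypDist_mem_Ico hb hc
  have hlt : (pseudoHypDist a b + pseudoHypDist b c) /
      (1 + pseudoHypDist a b * pseudoHypDist b c) < 1 := by
    rw [div_lt_one (by positivity)]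
    nlinarith
  calc poincareDist a c
      ≤ artanh ((pseudoHypDist a b + pseudoHypDist b c) /
          (1 + pseudoHypDist a b * pseudoHypDist b c)) :=
        artanh_le_artanh (by linarith [pseudoHypDist_nonneg a c])
          (pseudoHypDist_triangle ha hb hc) hlt
    _ = poincareDist a b + poincareDist b c :=
        (artanh_add_artanh ⟨hs₀, hs₁⟩ ⟨ht₀, ht₁⟩).symm

lemma norm_sub_le_two_mul_poincareDist (ha : ‖a‖ < 1) (hb : ‖b‖ < 1) :
    ‖a - b‖ ≤ 2 * poincareDist a b := by
  have hden : ‖1 - conj a * b‖ ≤ 2 := by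
    have h : ‖conj a * b‖ ≤ 1 := by
      rw [norm_mul, Complex.norm_conj]
      exact mul_le_one₀ ha.le (norm_nonneg b) hb.le
    linarith [norm_sub_le 1 (conj a * b), norm_one (α := ℂ)]
  calc ‖a - b‖ = ‖1 - conj a * b‖ * pseudoHypDist a b := by
        rw [pseudoHypDist, diskMobius, norm_div,
          mul_div_cancel₀ _ (norm_ne_zero_iff.2 (one_sub_conj_mul_ne_zero ha hb.le))]
    _ ≤ 2 * pseudoHypDist a b := by gcongr; exact pseudoHypDist_nonneg a b
    _ ≤ 2 * poincareDist a b := by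
        gcongr
        exact self_le_artanh (pseudoHypDist_nonneg a b) (pseudoHypDist_lt_one ha hb)

end PoincareDistance

section CaratheodoryDistance

variable {V : Type*} [NormedAddCommGroup V] [NormedSpace ℂ V]

/-- The holomorphic maps from `D` to the unit disc, i.e. the competitors in the definition of the
Carathéodory distance. -/
def discMaps (D : Set V) : Set (V → ℂ) := {f | DifferentiableOn ℂ f D ∧ ∀ z ∈ D, ‖f z‖ < 1}

variable {D U : Set V} {x y : V} {f : V → ℂ} {r : ℝ}

lemma zero_mem_discMaps (D : Set V) : 0 ∈ discMaps D := ⟨differentiableOn_const 0, by simp⟩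

lemma discMaps_anti (h : U ⊆ D) : discMaps D ⊆ discMaps U :=
  fun _ hf => ⟨hf.1.mono h, fun z hz => hf.2 z (h hz)⟩

lemma caraDist_eq_sSup_image (D : Set V) (x y : V) :
    caraDist D x y = sSup ((fun f => poincareDist (f x) (f y)) '' discMaps D) := by
  simp only [caraDist, discMaps, image, mem_ofPred_eq, and_assoc, eq_comm]
  rfl

lemma caraDist_le {C : ℝ} (h : ∀ f ∈ discMaps D, poincareDist (f x) (f y) ≤ C) :
    caraDist D x y ≤ C :=
  caraDist_eq_sSup_image D x y ▸
    csSup_le ((nonempty_of_mem (zero_mem_discMaps D)).image _) (forall_mem_image.2 h)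

lemma caraDist_nonneg (hx : x ∈ D) (hy : y ∈ D) : 0 ≤ caraDist D x y :=
  caraDist_eq_sSup_image D x y ▸ Real.sSup_nonneg
    (forall_mem_image.2 fun _ hf => poincareDist_nonneg (hf.2 x hx) (hf.2 y hy))

lemma pseudoHypDist_le_dist_div (hf : f ∈ discMaps (ball x r)) (hy : y ∈ ball x r) :
    pseudoHypDist (f x) (f y) ≤ dist y x / r := by
  have hx : x ∈ ball x r := mem_ball_self (nonempty_ball.1 ⟨y, hy⟩)
  have hdiff : DifferentiableOn ℂ (fun w => diskMobius (f x) (f w)) (ball x r) := by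
    simp only [diskMobius, div_eq_mul_inv]
    exact (hf.1.const_sub _).mul (((hf.1.const_mul _).const_sub _).inv
      fun w hw => one_sub_conj_mul_ne_zero (hf.2 x hx) (hf.2 w hw).le)
  have hcenter : diskMobius (f x) (f x) = 0 := by simp [diskMobius]
  have hmaps : MapsTo (fun w => diskMobius (f x) (f w)) (ball x r)
      (closedBall (diskMobius (f x) (f x)) 1) := fun w hw => by
    rw [hcenter, mem_closedBall_zero_iff]
    exact (norm_diskMobius_lt_one (hf.2 x hx) (hf.2 w hw)).le
  simpa [hcenter, pseudoHypDist, div_eq_inv_mul] using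
    Complex.dist_le_div_mul_dist_of_mapsTo_ball hdiff hmaps hy

lemma poincareDist_le_artanh_dist_div (hxD : ball x r ⊆ D) (hy : y ∈ ball x r)
    (hf : f ∈ discMaps D) : poincareDist (f x) (f y) ≤ artanh (dist y x / r) :=
  artanh_le_artanh (by linarith [pseudoHypDist_nonneg (f x) (f y)])
    (pseudoHypDist_le_dist_div (discMaps_anti hxD hf) hy)
    ((div_lt_one (nonempty_ball.1 ⟨y, hy⟩)).2 hy)

lemma caraDist_le_artanh_dist_div (hxD : ball x r ⊆ D) (hy : y ∈ ball x r) :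
    caraDist D x y ≤ artanh (dist y x / r) :=
  caraDist_le fun _ => poincareDist_le_artanh_dist_div hxD hy

/-- This guards `caraDist` against the junk value `0` of an unbounded supremum. -/
lemma bddAbove_poincareDist_image (hD : IsOpen D) (hDc : IsPreconnected D) (hx : x ∈ D)
    (hy : y ∈ D) : BddAbove ((fun f => poincareDist (f x) (f y)) '' discMaps D) := by
  let P : V → V → Prop := fun x y =>
    BddAbove ((fun f => poincareDist (f x) (f y)) '' discMaps D)
  have hnear : ∀ x ∈ D, ∀ᶠ y in 𝓝[D] x, P x y := fun x hx => by
    obtain ⟨r, hr, hrD⟩ := Metric.isOpen_iff.1 hD x hx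
    filter_upwards [mem_nhdsWithin_of_mem_nhds (ball_mem_nhds x hr)] with y hy
    exact ⟨_, forall_mem_image.2 fun _ => poincareDist_le_artanh_dist_div hrD hy⟩
  have htrans : ∀ x y z, x ∈ D → y ∈ D → z ∈ D → P x y → P y z → P x z := by
    rintro x y z hx hy hz ⟨M, hM⟩ ⟨N, hN⟩
    exact ⟨M + N, forall_mem_image.2 fun f hf =>
      (poincareDist_triangle (hf.2 x hx) (hf.2 y hy) (hf.2 z hz)).trans
        (add_le_add (hM (mem_image_of_mem _ hf)) (hN (mem_image_of_mem _ hf)))⟩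
  have hsymm : ∀ x y, x ∈ D → y ∈ D → P x y → P y x := fun x y _ _ hxy => by
    simpa only [P, poincareDist_comm] using hxy
  exact hDc.induction₂ P hnear htrans hsymm hx hy

lemma poincareDist_le_caraDist (hD : IsOpen D) (hDc : IsPreconnected D) (hx : x ∈ D) (hy : y ∈ D)
    (hf : f ∈ discMaps D) : poincareDist (f x) (f y) ≤ caraDist D x y :=
  caraDist_eq_sSup_image D x y ▸
    le_csSup (bddAbove_poincareDist_image hD hDc hx hy) (mem_image_of_mem _ hf)

lemma tendsto_caraDist_nhds_prod_self (hU : IsOpen U) {p : V} (hp : p ∈ U) :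
    Tendsto (fun q : V × V => caraDist U q.1 q.2) (𝓝 (p, p)) (𝓝 0) := by
  obtain ⟨r, hr, hrU⟩ := Metric.isOpen_iff.1 hU p hp
  have hball : ball p (r / 3) ×ˢ ball p (r / 3) ∈ 𝓝 (p, p) :=
    prod_mem_nhds (ball_mem_nhds p (by positivity)) (ball_mem_nhds p (by positivity))
  have hupper : Tendsto (fun q : V × V => artanh (dist q.2 q.1 / (2 * r / 3))) (𝓝 (p, p)) (𝓝 0) :=
    tendsto_artanh_zero.comp <|
      (continuous_snd.dist continuous_fst |>.div_const (2 * r / 3)).tendsto' _ _ (by simp)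
  refine squeeze_zero' ?_ ?_ hupper
  all_goals
    filter_upwards [hball] with q ⟨hq₁, hq₂⟩
    rw [mem_ball] at hq₁ hq₂
  · exact caraDist_nonneg (hrU (mem_ball.2 (by linarith))) (hrU (mem_ball.2 (by linarith)))
  · refine caraDist_le_artanh_dist_div ((ball_subset_ball' ?_).trans hrU) ?_
    · linarith
    · rw [mem_ball]
      linarith [dist_triangle_right q.2 q.1 p]

lemma norm_sub_le_mul_caraDist (hD : IsOpen D) (hDc : IsPreconnected D) (hr : 0 < r)
    (hDr : ∀ z ∈ D, ‖z‖ < r) (hx : x ∈ D) (hy : y ∈ D) : ‖x - y‖ ≤ 2 * r * caraDist D x y := by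
  obtain ⟨l, hl, hlxy⟩ := exists_dual_vector'' ℂ (x - y)
  have hf : (fun z => l z / r) ∈ discMaps D := by
    refine ⟨by fun_prop, fun z hz => ?_⟩
    rw [norm_div, Complex.norm_of_nonneg hr.le, div_lt_one hr]
    exact (l.le_of_opNorm_le hl z).trans_lt (by simpa using hDr z hz)
  have hnorm : ‖x - y‖ = r * ‖l x / r - l y / r‖ := by
    rw [← sub_div, ← map_sub, hlxy, norm_div, Complex.norm_of_nonneg hr.le,
      RCLike.norm_ofReal, abs_norm, mul_div_cancel₀ _ hr.ne']
  calc ‖x - y‖ = r * ‖l x / r - l y / r‖ := hnorm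
    _ ≤ r * (2 * poincareDist (l x / r) (l y / r)) := by
        gcongr
        exact norm_sub_le_two_mul_poincareDist (hf.2 x hx) (hf.2 y hy)
    _ ≤ r * (2 * caraDist D x y) := by
        gcongr
        exact poincareDist_le_caraDist (f := fun z => l z / r) hD hDc hx hy hf
    _ = 2 * r * caraDist D x y := by ring

lemma tendsto_of_tendsto_caraDist {ι : Type*} {l : Filter ι} {u : ι → V} (hD : IsOpen D)
    (hDc : IsPreconnected D) (hDb : Bornology.IsBounded D) (hu : ∀ i, u i ∈ D) (hx : x ∈ D)
    (hlim : Tendsto (fun i => caraDist D (u i) x) l (𝓝 0)) : Tendsto u l (𝓝 x) := by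
  obtain ⟨r, hr, hDr⟩ := hDb.exists_pos_norm_lt
  rw [tendsto_iff_norm_sub_tendsto_zero]
  exact squeeze_zero (fun i => norm_nonneg _)
    (fun i => norm_sub_le_mul_caraDist hD hDc hr hDr (hu i) hx)
    (by simpa using hlim.const_mul (2 * r))

/-- Cauchy sequences for the Carathéodory distance of `D`. -/
def IsCaraCauchySeq (D : Set V) (u : ℕ → V) : Prop :=
  ∀ ε : ℝ, 0 < ε → ∃ N : ℕ, ∀ m ≥ N, ∀ n ≥ N, caraDist D (u m) (u n) < ε

/-- Completeness of `D` for the Carathéodory distance: every Cauchy sequence of points of `D`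
converges, for that distance, to a point of `D`. -/
def IsCaraComplete (D : Set V) : Prop :=
  ∀ u : ℕ → V, (∀ n, u n ∈ D) → IsCaraCauchySeq D u →
    ∃ z ∈ D, Tendsto (fun n => caraDist D (u n) z) atTop (𝓝 0)

lemma isCaraCauchySeq_of_tendsto (hU : IsOpen U) {p : V} (hp : p ∈ U) {u : ℕ → V}
    (hu : Tendsto u atTop (𝓝 p)) : IsCaraCauchySeq U u := fun ε hε => by
  have hpair : Tendsto (fun k : ℕ × ℕ => (u k.1, u k.2)) atTop (𝓝 (p, p)) := by
    rw [← prod_atTop_atTop_eq]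
    exact (hu.comp tendsto_fst).prodMk_nhds (hu.comp tendsto_snd)
  have hsmall : ∀ᶠ q : V × V in 𝓝 (p, p), caraDist U q.1 q.2 < ε :=
    (tendsto_caraDist_nhds_prod_self hU hp).eventually_lt_const hε
  exact eventually_atTop_prod_self'.1 (hpair.eventually hsmall)

lemma IsCaraCauchySeq.of_le {u : ℕ → V} (h : IsCaraCauchySeq U u)
    (hle : ∀ m n, caraDist D (u m) (u n) ≤ caraDist U (u m) (u n)) : IsCaraCauchySeq D u :=
  fun ε hε => (h ε hε).imp fun _ hN m hm n hn => (hle m n).trans_lt (hN m hm n hn)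

end CaratheodoryDistance

section IdentityPrinciple

variable {V : Type*} [NormedAddCommGroup V] [NormedSpace ℂ V]
  {E : Type*} [NormedAddCommGroup E] [NormedSpace ℂ E] [CompleteSpace E]
  {f g : V → E} {U : Set V} {q : V}

lemma eqOn_of_convex_of_eventuallyEq (hU : IsOpen U) (hUc : Convex ℝ U)
    (hf : DifferentiableOn ℂ f U) (hg : DifferentiableOn ℂ g U) (hq : q ∈ U)
    (hfg : f =ᶠ[𝓝 q] g) : EqOn f g U := fun w hw => by
  let line : ℂ → V := fun t => q + t • (w - q)
  have hline : Differentiable ℂ line := by fun_prop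
  have hline₀ : line 0 = q := by simp [line]
  have hline₁ : line 1 = w := by simp [line]
  have hopen : IsOpen (line ⁻¹' U) := hU.preimage hline.continuous
  have hconvex : Convex ℝ (line ⁻¹' U) := (hUc.translate_preimage_right q).linear_preimage
    ((LinearMap.toSpanSingleton ℂ V (w - q)).restrictScalars ℝ)
  have hanalytic {h : V → E} (hh : DifferentiableOn ℂ h U) :
      AnalyticOnNhd ℂ (h ∘ line) (line ⁻¹' U) :=
    (hh.comp hline.differentiableOn fun _ ht => ht).analyticOnNhd hopen
  have hgerm : f ∘ line =ᶠ[𝓝 0] g ∘ line :=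
    (hline.continuous.tendsto' 0 q hline₀).eventually hfg
  have heq := (hanalytic hf).eqOn_of_preconnected_of_eventuallyEq (hanalytic hg)
    hconvex.isPreconnected (by rwa [mem_preimage, hline₀]) hgerm
    (show (1 : ℂ) ∈ line ⁻¹' U by rwa [mem_preimage, hline₁])
  simpa only [Function.comp_apply, hline₁] using heq

lemma eqOn_of_isPreconnected_of_eventuallyEq (hU : IsOpen U) (hUc : IsPreconnected U)
    (hf : DifferentiableOn ℂ f U) (hg : DifferentiableOn ℂ g U) (hq : q ∈ U)
    (hfg : f =ᶠ[𝓝 q] g) : EqOn f g U := by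
  have hgerm : ∀ y ∈ U, f =ᶠ[𝓝 q] g → f =ᶠ[𝓝 y] g := fun y hy => by
    refine hUc.induction₂' (fun x y => f =ᶠ[𝓝 x] g → f =ᶠ[𝓝 y] g) (fun x hx => ?_)
      (fun _ _ _ _ _ _ hxy hyz h => hyz (hxy h)) hq hy
    obtain ⟨r, hr, hrU⟩ := Metric.isOpen_iff.1 hU x hx
    have hball {a b : V} (ha : a ∈ ball x r) (hb : b ∈ ball x r) (h : f =ᶠ[𝓝 a] g) :
        f =ᶠ[𝓝 b] g :=
      (eqOn_of_convex_of_eventuallyEq isOpen_ball (convex_ball x r) (hf.mono hrU) (hg.mono hrU)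
        ha h).eventuallyEq_of_mem (isOpen_ball.mem_nhds hb)
    filter_upwards [mem_nhdsWithin_of_mem_nhds (ball_mem_nhds x hr)] with y hy
    exact ⟨hball (mem_ball_self hr) hy, hball hy (mem_ball_self hr)⟩
  exact fun y hy => (hgerm y hy hfg).eq_of_nhds

end IdentityPrinciple

lemma exists_mem_closure_connectedComponentIn_notMem {X : Type*} [TopologicalSpace X]
    [LocallyConnectedSpace X] {D U : Set X} {w : X} (hD : IsOpen D) (hU : IsOpen U)
    (hUc : IsPreconnected U) (hUD : ¬U ⊆ D) (hw : w ∈ D ∩ U) :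
    ∃ p ∈ U, p ∈ closure (connectedComponentIn (D ∩ U) w) ∧ p ∉ D := by
  by_contra! hcon
  set C := connectedComponentIn (D ∩ U) w
  have hwC : w ∈ C := mem_connectedComponentIn hw
  have hCDU : C ⊆ D ∩ U := connectedComponentIn_subset _ _
  have hrelClosed : closure C ∩ (D ∩ U) ⊆ C :=
    (isPreconnected_connectedComponentIn.subset_closure (subset_inter subset_closure hCDU)
      inter_subset_left).subset_connectedComponentIn ⟨subset_closure hwC, hw⟩ inter_subset_right
  have hUC : U ⊆ C := hUc.subset_of_closure_inter_subset (hD.inter hU).connectedComponentIn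
    ⟨w, hw.2, hwC⟩ fun p hp => hrelClosed ⟨hp.1, hcon p hp.2 hp.1, hp.2⟩
  exact hUD fun u hu => (hCDU (hUC hu)).1

section Extension

variable {V : Type*} [NormedAddCommGroup V] [NormedSpace ℂ V]

/-- Every holomorphic function on `D` has a holomorphic continuation to `U` along `W`, i.e. one
agreeing with it on `W` (but possibly not on the rest of `D ∩ U`). -/
def ExtendsHolomorphically (D U W : Set V) : Prop :=
  ∀ f : V → ℂ, DifferentiableOn ℂ f D → ∃ F : V → ℂ, DifferentiableOn ℂ F U ∧ EqOn f F W

namespace ExtendsHolomorphically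

variable {D U W : Set V} {w : V}

lemma connectedComponentIn (h : ExtendsHolomorphically D U W) (hD : IsOpen D) (hU : IsOpen U)
    (hW : IsOpen W) (hWDU : W ⊆ D ∩ U) (hw : w ∈ W) :
    ExtendsHolomorphically D U (connectedComponentIn (D ∩ U) w) := fun f hf => by
  obtain ⟨F, hF, hfF⟩ := h f hf
  have hsub : _root_.connectedComponentIn (D ∩ U) w ⊆ D ∩ U := connectedComponentIn_subset _ _
  exact ⟨F, hF, eqOn_of_isPreconnected_of_eventuallyEq (hD.inter hU).connectedComponentIn
    isPreconnected_connectedComponentIn (hf.mono (hsub.trans inter_subset_left))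
    (hF.mono (hsub.trans inter_subset_right)) (mem_connectedComponentIn (hWDU hw))
    (hfF.eventuallyEq_of_mem (hW.mem_nhds hw))⟩

lemma image_subset_image (h : ExtendsHolomorphically D U W) (hU : IsOpen U)
    (hUc : IsPreconnected U) (hW : IsOpen W) (hWDU : W ⊆ D ∩ U) (hWne : W.Nonempty) {f F : V → ℂ}
    (hf : DifferentiableOn ℂ f D) (hF : DifferentiableOn ℂ F U) (hfF : EqOn f F W) :
    F '' U ⊆ f '' D := by
  rintro _ ⟨u, hu, rfl⟩
  by_contra homitted
  have hne : ∀ z ∈ D, f z - F u ≠ 0 := fun z hz h₀ => homitted ⟨z, hz, sub_eq_zero.1 h₀⟩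
  obtain ⟨w, hw⟩ := hWne
  obtain ⟨G, hG, hfG⟩ := h (fun z => (f z - F u)⁻¹) ((hf.sub_const _).inv hne)
  have hgerm : (fun z => (F z - F u) * G z) =ᶠ[𝓝 w] fun _ => 1 := by
    filter_upwards [hW.mem_nhds hw] with z hz
    rw [← hfF hz, ← hfG hz, mul_inv_cancel₀ (hne z (hWDU hz).1)]
  have hone : (F u - F u) * G u = 1 := eqOn_of_isPreconnected_of_eventuallyEq hU hUc
    ((hF.sub_const _).mul hG) (differentiableOn_const 1) (hWDU hw).2 hgerm hu
  simp at hone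

lemma caraDist_le (h : ExtendsHolomorphically D U W) (hU : IsOpen U) (hUc : IsPreconnected U)
    (hW : IsOpen W) (hWDU : W ⊆ D ∩ U) {x y : V} (hx : x ∈ W) (hy : y ∈ W) :
    caraDist D x y ≤ caraDist U x y := by
  refine _root_.caraDist_le fun f hf => ?_
  obtain ⟨F, hF, hfF⟩ := h f hf.1
  have hFdisc : F ∈ discMaps U := by
    refine ⟨hF, fun u hu => ?_⟩
    obtain ⟨z, hz, hzu⟩ :=
      h.image_subset_image hU hUc hW hWDU ⟨x, hx⟩ hf.1 hF hfF (mem_image_of_mem F hu)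
    exact hzu ▸ hf.2 z hz
  rw [hfF hx, hfF hy]
  exact poincareDist_le_caraDist hU hUc (hWDU hx).2 (hWDU hy).2 hFdisc

end ExtendsHolomorphically

end Extension

theorem stmt_8_general {V : Type*} [NormedAddCommGroup V] [NormedSpace ℂ V] {D : Set V}
    (hD : IsOpen D) (hDc : IsPreconnected D) (hDb : Bornology.IsBounded D)
    (hcomplete : IsCaraComplete D) : IsDomainOfHolomorphy D := by
  rintro ⟨U, W, hU, hUc, -, hUD, hW, ⟨w, hw⟩, hWDU, hext⟩
  obtain ⟨p, hpU, hpC, hpD⟩ := exists_mem_closure_connectedComponentIn_notMem hD hU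
    hUc.isPreconnected hUD (hWDU hw)
  have hextC := ExtendsHolomorphically.connectedComponentIn hext hD hU hW hWDU hw
  set C := connectedComponentIn (D ∩ U) w
  have hCDU : C ⊆ D ∩ U := connectedComponentIn_subset _ _
  obtain ⟨u, huC, hup⟩ := mem_closure_iff_seq_limit.1 hpC
  have huD : ∀ n, u n ∈ D := fun n => (hCDU (huC n)).1
  have hcauchy : IsCaraCauchySeq D u := (isCaraCauchySeq_of_tendsto hU hpU hup).of_le fun m n =>
    hextC.caraDist_le hU hUc.isPreconnected (hD.inter hU).connectedComponentIn hCDU (huC m) (huC n)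
  obtain ⟨z, hz, hlim⟩ := hcomplete u huD hcauchy
  have huz : Tendsto u atTop (𝓝 z) := tendsto_of_tendsto_caraDist hD hDc hDb huD hz hlim
  exact hpD (tendsto_nhds_unique hup huz ▸ hz)

/-- A bounded domain `D` in a complex Banach space which is complete with
respect to the Carathéodory distance is a domain of holomorphy. -/
theorem stmt_8
    {V : Type*} [NormedAddCommGroup V] [NormedSpace ℂ V] [CompleteSpace V]
    (D : Set V) (hD : IsOpen D) (hDc : IsConnected D) (hDb : Bornology.IsBounded D)
    (hcomplete : ∀ x : ℕ → V, (∀ n, x n ∈ D) →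
      (∀ ε : ℝ, 0 < ε → ∃ N : ℕ, ∀ m ≥ N, ∀ n ≥ N, caraDist D (x m) (x n) < ε) →
      ∃ z ∈ D, Filter.Tendsto (fun n => caraDist D (x n) z) Filter.atTop (nhds 0)) :
    IsDomainOfHolomorphy D :=
  stmt_8_general hD hDc.isPreconnected hDb hcomplete
end

section
/- Let Ω be a uniformly elliptic domain in a Banach space V with constants 0 < r < R, let p ∈ Ω and q ∈ ∂Ω satisfy ‖p − q‖ = d(p, ∂Ω), and let q'' be the point with Ω ⊂ B_V(q'', R) and q ∈ ∂B_V(q'', R) from uniform ellipticity. Then either p is colinear with q and q'', or there exists q₁ ∈ ∂Ω ∩ ∂B_V(q'', R) colinear with p and q'' satisfying ‖p − q₁‖ = ‖p − q‖ = d(p, ∂Ω). -/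
/-!
Put `d = ‖p - q‖ = infDist p (frontier Ω)`. Extend the ray from `q''` through `p` to the point `q₁`
of the sphere of radius `R` about `q''` (if `p = q''`, any point of the sphere serves as `q₁`). The
triangle inequality for `q''`, `p`, `q` gives
`‖p - q₁‖ = R - ‖p - q''‖ ≤ d`, so `q₁` lies in `closedBall p d`, which is contained in `closure Ω`
because `d` is also the distance from `p` to `Ωᶜ`. On the other hand `q₁ ∉ Ω`, since
`Ω ⊆ ball q'' R`. Hence `q₁` is a boundary point of `Ω`, and `‖p - q₁‖ ≥ d`.
-/

open Metric Set

/-- A bounded convex domain `Ω` in a Banach space `V` is uniformly elliptic with constants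
`0 < r < R` if each boundary point `q` admits unique points `q', q''` colinear with `q`
such that `B(q', r) ⊆ Ω ⊆ B(q'', R)` and `q ∈ ∂B(q', r) ∩ ∂B(q'', R)`. -/
def UniformlyElliptic {V : Type*} [NormedAddCommGroup V] [NormedSpace ℂ V]
    (Ω : Set V) (r R : ℝ) : Prop :=
  0 < r ∧ r < R ∧
  ∀ q ∈ frontier Ω, ∃! qq : V × V,
    ball qq.1 r ⊆ Ω ∧ Ω ⊆ ball qq.2 R ∧
    q ∈ frontier (ball qq.1 r) ∧ q ∈ frontier (ball qq.2 R) ∧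
    Collinear ℝ ({q, qq.1, qq.2} : Set V)

theorem nonempty_inter_frontier_of_isPreconnected {X : Type*} [TopologicalSpace X] {s t : Set X}
    (ht : IsPreconnected t) (hts : (t ∩ s).Nonempty) (hts' : (t \ s).Nonempty) :
    (t ∩ frontier s).Nonempty := by
  by_contra h
  have hcover : t ⊆ interior s ∪ (closure s)ᶜ := fun x hx ↦ by
    by_contra hx'
    rw [mem_union, not_or, mem_compl_iff, not_not] at hx'
    exact h ⟨x, hx, hx'.2, hx'.1⟩
  obtain ⟨x, hxt, hxs⟩ := hts
  obtain ⟨y, hyt, hys⟩ := hts'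
  have hx : x ∈ interior s := (hcover hxt).resolve_right fun hx ↦ hx (subset_closure hxs)
  have hdisj : Disjoint (interior s) (closure s)ᶜ :=
    disjoint_compl_right.mono_left interior_subset_closure
  have hsub : t ⊆ interior s := ht.subset_left_of_subset_union isOpen_interior
    isClosed_closure.isOpen_compl hdisj hcover ⟨x, hxt, hx⟩
  exact hys (interior_subset (hsub hyt))

theorem infDist_frontier_eq_infDist_compl {E : Type*} [SeminormedAddCommGroup E] [NormedSpace ℝ E]
    {s : Set E} {x : E} (hx : x ∈ s) : infDist x (frontier s) = infDist x sᶜ := by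
  have hcross : ∀ y ∈ sᶜ, (segment ℝ x y ∩ frontier s).Nonempty := fun y hy ↦
    nonempty_inter_frontier_of_isPreconnected (convex_segment x y).isPreconnected
      ⟨x, left_mem_segment ℝ x y, hx⟩ ⟨y, right_mem_segment ℝ x y, hy⟩
  obtain hs | ⟨y, hy⟩ := sᶜ.eq_empty_or_nonempty
  · rw [hs, compl_empty_iff.1 hs, frontier_univ]
  apply le_antisymm
  · refine (le_infDist ⟨y, hy⟩).2 fun y hy ↦ ?_
    obtain ⟨z, hz, hzs⟩ := hcross y hy
    calc infDist x (frontier s) ≤ dist x z := infDist_le_dist_of_mem hzs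
      _ ≤ dist x z + dist z y := le_add_of_nonneg_right dist_nonneg
      _ = dist x y := dist_add_dist_of_mem_segment hz
  · have hsub : frontier s ⊆ closure sᶜ := frontier_compl s ▸ frontier_subset_closure
    rw [← infDist_closure (s := sᶜ)]
    exact infDist_le_infDist_of_subset hsub (hcross y hy).right

theorem exists_mem_sphere_wbtw {V P : Type*} [NormedAddCommGroup V] [NormedSpace ℝ V]
    [MetricSpace P] [NormedAddTorsor V P] {c x : P} {R : ℝ} (hx : x ∈ closedBall c R)
    (hne : (sphere c R).Nonempty) : ∃ y ∈ sphere c R, Wbtw ℝ c x y := by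
  obtain rfl | hcx := eq_or_ne c x
  · exact hne.imp fun y hy ↦ ⟨hy, wbtw_self_left ℝ c y⟩
  have hpos : 0 < dist c x := dist_pos.2 hcx
  have hscale : 1 ≤ R / dist c x := (one_le_div hpos).2 (mem_closedBall'.1 hx)
  refine ⟨AffineMap.lineMap c x (R / dist c x), ?_, ?_⟩
  · rw [mem_sphere, dist_lineMap_left, Real.norm_of_nonneg (zero_le_one.trans hscale),
      div_mul_cancel₀ _ hpos.ne']
  · exact wbtw_iff_left_eq_or_right_mem_image_Ici.2 (.inr (mem_image_of_mem _ hscale))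

theorem stmt_17_general {V : Type*} [NormedAddCommGroup V] [NormedSpace ℝ V] {Ω : Set V}
    {p q q'' : V} {R : ℝ} (hp : p ∈ Ω) (hdist : ‖p - q‖ ≤ infDist p (frontier Ω))
    (hsub : Ω ⊆ ball q'' R) (hqfr : q ∈ frontier (ball q'' R)) :
    ∃ q₁ ∈ frontier Ω ∩ frontier (ball q'' R), Wbtw ℝ q'' p q₁ ∧ ‖p - q₁‖ = ‖p - q‖ := by
  simp only [frontier_ball q'' (pos_of_mem_ball (hsub hp)).ne', ← dist_eq_norm]
    at hdist hqfr ⊢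
  rw [infDist_frontier_eq_infDist_compl hp] at hdist
  obtain ⟨q₁, hq₁, hbtw⟩ := exists_mem_sphere_wbtw (ball_subset_closedBall (hsub hp)) ⟨q, hqfr⟩
  have hle : dist p q₁ ≤ dist p q := by
    have hsplit : dist q'' p + dist p q₁ = R := hbtw.dist_add_dist.trans (mem_sphere'.1 hq₁)
    have htriangle : R ≤ dist q'' p + dist p q := mem_sphere'.1 hqfr ▸ dist_triangle q'' p q
    linarith
  have hnotMem : q₁ ∉ Ω := fun h ↦ (mem_ball.1 (hsub h)).ne hq₁
  have hclosure : q₁ ∈ closure Ω :=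
    closedBall_infDist_compl_subset_closure hp (mem_closedBall'.2 (hle.trans hdist))
  have hge : dist p q ≤ dist p q₁ := hdist.trans (infDist_le_dist_of_mem hnotMem)
  exact ⟨q₁, ⟨⟨hclosure, fun h ↦ hnotMem (interior_subset h)⟩, hq₁⟩, hbtw, hle.antisymm hge⟩

/-- Let `Ω` be uniformly elliptic with constants `0 < r < R`, let `p ∈ Ω`,
`q ∈ ∂Ω` with `‖p − q‖ = d(p, ∂Ω)`, and let `q''` satisfy `Ω ⊆ B(q'', R)` and
`q ∈ ∂B(q'', R)`.  Then either `p` is colinear with `q` and `q''`, or there is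
`q₁ ∈ ∂Ω ∩ ∂B(q'', R)` colinear with `p` and `q''` with `‖p − q₁‖ = ‖p − q‖`. -/
theorem stmt_17
    {V : Type*} [NormedAddCommGroup V] [NormedSpace ℂ V] [CompleteSpace V]
    (Ω : Set V) (hΩ : IsOpen Ω) (hΩc : IsConnected Ω) (hΩb : Bornology.IsBounded Ω)
    (hconv : Convex ℝ Ω)
    (r R : ℝ) (hUE : UniformlyElliptic Ω r R)
    (p : V) (hp : p ∈ Ω)
    (q : V) (hq : q ∈ frontier Ω) (hdist : ‖p - q‖ = infDist p (frontier Ω))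
    (q'' : V) (hsub : Ω ⊆ ball q'' R) (hqfr : q ∈ frontier (ball q'' R)) :
    Collinear ℝ ({p, q, q''} : Set V) ∨
    ∃ q₁ ∈ frontier Ω ∩ frontier (ball q'' R),
      Collinear ℝ ({p, q₁, q''} : Set V) ∧ ‖p - q₁‖ = ‖p - q‖ := by
  obtain ⟨q₁, hq₁, hbtw, hnorm⟩ := stmt_17_general hp hdist.le hsub hqfr
  exact .inr ⟨q₁, hq₁, insert_comm p q₁ {q''} ▸ hbtw.symm.collinear, hnorm⟩
end
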